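/- There exist two nonnegative smooth integrable functions f, g on ℝ that have the same 3-deck but such that g is not a translate of f. Explicitly, with ψ(x) = (sin(πx/2)/(πx))², the functions f(x) = (1 + cos(4πx))ψ(x) and g(x) = (1 − cos(4πx))ψ(x) have the same 3-deck, but there is no a ∈ ℝ with g(x) = f(x−a) for almost every x. -/

import Mathlib

/-!
Write `ψ` for `psi`. It is the Fourier transform of the triangle function supported on
`[-1/2, 1/2]` (`fourier_tri`), so it is smooth (`psi_contDiff`), and by inversion its own transform
vanishes outside `[-1/2, 1/2]` (`fourier_psi`). Each multiplication by a translate of `ψ` enlarges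
the spectrum by at most `1/2` (`fourier_mul_psi`), hence `ψ(t) ψ(t+x) ψ(t+y)` has no frequency `s`
with `|s| ≥ 3/2` (`fourier_triple`).

With `cᵢ = cos (4π(t + xᵢ))`, the difference of the two integrands of the decks is
`∏ ψ(t + xᵢ)` times `∏ (1 + cᵢ) - ∏ (1 - cᵢ) = 2 (c₀ + c₁ + c₂ + c₀ c₁ c₂)`. The latter contains only
the frequencies `±2` and `±6`, so its integral against the triple product is zero (`deck_eq`).

Finally `f 0 = 1/2`, while `g < 1/2` everywhere: `ψ < 1/4` away from `0`, and `g 0 = 0`. As both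
functions are continuous, `g` is not almost everywhere equal to a translate of `f`.
-/

open MeasureTheory Real

/-- `ψ(x) = (sin(πx/2)/(πx))²`, defined by continuity at `0`. -/
noncomputable def psi (x : ℝ) : ℝ :=
  if x = 0 then 1 / 4 else (Real.sin (π / 2 * x) / (π * x)) ^ 2

open scoped FourierTransform

/-- The triangle function `ξ ↦ max (1/2 - |ξ|) 0`, complex valued so that `𝓕` applies to it. -/
noncomputable def tri (ξ : ℝ) : ℂ := ((max (1 / 2 - |ξ|) 0 : ℝ) : ℂ)

lemma tri_continuous : Continuous tri := by
  unfold tri; fun_prop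

lemma tri_eq_zero {ξ : ℝ} (h : 1 / 2 ≤ |ξ|) : tri ξ = 0 := by
  unfold tri; rw [max_eq_right (by linarith)]; simp

lemma tri_eq_of_le {ξ : ℝ} (h : |ξ| ≤ 1 / 2) : tri ξ = 1 / 2 - (|ξ| : ℝ) := by
  unfold tri; rw [max_eq_left (by linarith)]; push_cast; rfl

lemma tri_neg (ξ : ℝ) : tri (-ξ) = tri ξ := by simp [tri]

lemma tri_hasCompactSupport : HasCompactSupport tri := by
  refine HasCompactSupport.intro (isCompact_Icc (a := -(1 / 2 : ℝ)) (b := 1 / 2)) ?_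
  intro x hx
  apply tri_eq_zero
  by_contra! h
  exact hx (abs_le.1 h.le)

lemma tri_integrable : Integrable tri :=
  tri_continuous.integrable_of_hasCompactSupport tri_hasCompactSupport

lemma integral_half {c : ℂ} (hc : c ≠ 0) :
    ∫ ξ : ℝ in (0 : ℝ)..(1 / 2), Complex.exp (c * ξ) * (1 / 2 - ξ) =
      Complex.exp (c / 2) / c ^ 2 - 1 / (2 * c) - 1 / c ^ 2 := by
  have key : ∀ ξ : ℝ, HasDerivAt (fun ξ : ℝ => (1 / 2 - (ξ : ℂ)) * Complex.exp (c * ξ) / c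
      + Complex.exp (c * ξ) / c ^ 2) (Complex.exp (c * ξ) * (1 / 2 - ξ)) ξ := by
    intro ξ
    have h1 : HasDerivAt (fun ξ : ℝ => (ξ : ℂ)) 1 ξ := Complex.ofRealCLM.hasDerivAt
    have h2 : HasDerivAt (fun ξ : ℝ => Complex.exp (c * ξ)) (Complex.exp (c * ξ) * (c * 1)) ξ :=
      (h1.const_mul c).cexp
    convert! (((h1.const_sub (1 / 2)).mul h2).div_const c).add (h2.div_const (c ^ 2)) using 1
    field_simp
    ring
  rw [intervalIntegral.integral_eq_sub_of_hasDerivAt (fun ξ _ => key ξ)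
    (Continuous.intervalIntegrable (by fun_prop) _ _)]
  push_cast
  have : c * (1 / 2) = c / 2 := by ring
  rw [this]
  simp
  field_simp
  ring

lemma integral_half_zero :
    ∫ ξ : ℝ in (0 : ℝ)..(1 / 2), ((1 : ℂ) / 2 - ξ) = 1 / 8 := by
  have key : ∀ ξ : ℝ, HasDerivAt (fun ξ : ℝ => (ξ : ℂ) / 2 - (ξ : ℂ) ^ 2 / 2)
      ((1 : ℂ) / 2 - ξ) ξ := by
    intro ξ
    have h1 : HasDerivAt (fun ξ : ℝ => (ξ : ℂ)) 1 ξ := Complex.ofRealCLM.hasDerivAt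
    convert! (h1.div_const 2).sub ((h1.pow 2).div_const 2) using 1
    push_cast
    ring
  rw [intervalIntegral.integral_eq_sub_of_hasDerivAt (fun ξ _ => key ξ)
    (Continuous.intervalIntegrable (by fun_prop) _ _)]
  norm_num

/-- The integral over the support is folded onto `[0, 1/2]`. -/
lemma fourier_tri_split (x : ℝ) : 𝓕 tri x =
    (∫ ξ : ℝ in (0 : ℝ)..(1 / 2),
      Complex.exp ((2 * π * x * Complex.I) * ξ) * (1 / 2 - ξ)) +
    ∫ ξ : ℝ in (0 : ℝ)..(1 / 2),
      Complex.exp (-(2 * π * x * Complex.I) * ξ) * (1 / 2 - ξ) := by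
  rw [Real.fourier_real_eq_integral_exp_smul]
  have hcont : Continuous fun v : ℝ =>
      Complex.exp (↑(-2 * π * v * x) * Complex.I) • tri v := by
    have := tri_continuous
    fun_prop
  rw [← intervalIntegral.integral_eq_integral_of_support_subset (a := -(1 / 2)) (b := 1 / 2),
    ← intervalIntegral.integral_add_adjacent_intervals (b := 0)
      (hcont.intervalIntegrable _ _) (hcont.intervalIntegrable _ _)]
  · congr 1
    · have := intervalIntegral.integral_comp_neg (a := 0) (b := 1 / 2) fun v : ℝ =>
        Complex.exp (↑(-2 * π * v * x) * Complex.I) • tri v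
      rw [neg_zero] at this
      rw [← this]
      refine intervalIntegral.integral_congr fun ξ hξ => ?_
      rw [Set.uIcc_of_le (by norm_num)] at hξ
      simp only [smul_eq_mul]
      rw [tri_neg, tri_eq_of_le (by rw [abs_of_nonneg hξ.1]; exact hξ.2), abs_of_nonneg hξ.1]
      congr 2
      push_cast
      ring
    · refine intervalIntegral.integral_congr fun ξ hξ => ?_
      rw [Set.uIcc_of_le (by norm_num)] at hξ
      simp only [smul_eq_mul]
      rw [tri_eq_of_le (by rw [abs_of_nonneg hξ.1]; exact hξ.2), abs_of_nonneg hξ.1]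
      congr 2
      push_cast
      ring
  · intro v hv
    have : ¬ (1 / 2 ≤ |v|) := fun h => hv (by simp [tri_eq_zero h])
    have := abs_lt.1 (not_le.1 this)
    exact ⟨this.1, this.2.le⟩

lemma fourier_tri (x : ℝ) : 𝓕 tri x = (psi x : ℂ) := by
  rw [fourier_tri_split]
  by_cases hx : x = 0
  · subst hx
    simp only [psi, if_true]
    simp only [Complex.ofReal_zero, mul_zero, zero_mul, neg_zero, Complex.exp_zero, one_mul,
      integral_half_zero]
    norm_num
  · have hxC : (x : ℂ) ≠ 0 := by exact_mod_cast hx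
    have hpi : (π : ℂ) ≠ 0 := by exact_mod_cast pi_ne_zero
    have hc : (2 * π * x * Complex.I : ℂ) ≠ 0 := by
      simp [hx, pi_ne_zero]
    rw [integral_half hc, integral_half (neg_ne_zero.2 hc)]
    simp only [psi, if_neg hx]
    push_cast
    have h1 : (2 * π * x * Complex.I : ℂ) / 2 = (2 * (π / 2 * x) : ℂ) * Complex.I := by ring
    have h2 : -(2 * π * x * Complex.I : ℂ) / 2 = -(2 * (π / 2 * x) : ℂ) * Complex.I := by ring
    have h3 : Complex.exp ((2 * (π / 2 * x) : ℂ) * Complex.I) +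
        Complex.exp (-(2 * (π / 2 * x) : ℂ) * Complex.I) =
        2 - 4 * Complex.sin (π / 2 * x) ^ 2 := by
      rw [← Complex.two_cos, Complex.cos_two_mul, Complex.cos_sq']
      ring
    rw [h1, h2, eq_sub_of_add_eq h3]
    have hI : Complex.I ^ 2 = -1 := Complex.I_sq
    have h4 : (2 * π * x * Complex.I : ℂ) ^ 2 = -(4 * π ^ 2 * x ^ 2) := by
      rw [mul_pow, hI]; ring
    rw [neg_sq, h4]
    field_simp
    ring

lemma psi_contDiff : ContDiff ℝ (⊤ : ℕ∞) psi := by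
  have h : ContDiff ℝ (⊤ : ℕ∞) (𝓕 tri) := by
    refine Real.contDiff_fourier fun n _ => ?_
    refine Continuous.integrable_of_hasCompactSupport ?_ ?_
    · have := tri_continuous
      fun_prop
    · exact tri_hasCompactSupport.norm.mul_left
  have h2 : psi = fun x => Complex.reCLM (𝓕 tri x) := by
    funext x; simp [fourier_tri]
  rw [h2]
  exact Complex.reCLM.contDiff.comp h

lemma psi_continuous : Continuous psi := psi_contDiff.continuous

lemma psi_nonneg (x : ℝ) : 0 ≤ psi x := by
  unfold psi; split_ifs <;> positivity

lemma psi_lt {x : ℝ} (hx : x ≠ 0) : psi x < 1 / 4 := by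
  have h0 : π / 2 * x ≠ 0 := mul_ne_zero (by positivity) hx
  have h := Real.sin_sq_lt_sq h0
  rw [psi, if_neg hx, div_pow, div_lt_iff₀ (by positivity)]
  linarith [show (π / 2 * x) ^ 2 = 1 / 4 * (π * x) ^ 2 by ring]

lemma psi_le (x : ℝ) : psi x ≤ 1 / 4 := by
  by_cases hx : x = 0
  · simp [psi, hx]
  · exact (psi_lt hx).le

lemma psi_integrable : Integrable psi := by
  refine integrable_inv_one_add_sq.mono' psi_continuous.aestronglyMeasurable
    (Filter.Eventually.of_forall fun x => ?_)
  rw [Real.norm_of_nonneg (psi_nonneg x), ← one_div, le_div_iff₀ (by positivity)]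
  have h : psi x * x ^ 2 ≤ 1 / 4 := by
    by_cases hx : x = 0
    · simp [hx]
    · have hs := Real.sin_sq_le_one (π / 2 * x)
      have hp := Real.pi_gt_three
      rw [psi, if_neg hx]
      have : (sin (π / 2 * x) / (π * x)) ^ 2 * x ^ 2 = sin (π / 2 * x) ^ 2 / π ^ 2 := by
        field_simp
      rw [this, div_le_iff₀ (by positivity)]
      nlinarith
  linarith [psi_le x]

/-- By Fourier inversion, `𝓕 ψ` is the triangle function. -/
lemma fourier_psi (s : ℝ) : 𝓕 (fun x => (psi x : ℂ)) s = tri s := by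
  have h : 𝓕 tri = fun x => (psi x : ℂ) := funext fourier_tri
  have h2 := tri_integrable.fourierInv_fourier_eq (h ▸ psi_integrable.ofReal)
    (v := -s) tri_continuous.continuousAt
  rwa [Real.fourierInv_eq_fourier_neg, neg_neg, tri_neg, h] at h2

/-- Modulation shifts the Fourier transform. -/
lemma fourier_exp_mul (F : ℝ → ℂ) (s ξ : ℝ) :
    𝓕 (fun t : ℝ => Complex.exp (↑(-2 * π * t * s) * Complex.I) * F t) ξ = 𝓕 F (s + ξ) := by
  rw [Real.fourier_real_eq_integral_exp_smul, Real.fourier_real_eq_integral_exp_smul]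
  congr 1
  funext t
  simp only [smul_eq_mul]
  rw [← mul_assoc, ← Complex.exp_add]
  congr 2
  push_cast
  ring

/-- Multiplication by a translate of `ψ` enlarges the spectrum by at most `1/2`: by
self-adjointness of `𝓕`, the transform of the product is an average, weighted by a modulated
triangle, of values of `𝓕 F` at distance at most `1/2`. -/
lemma fourier_mul_psi {F : ℝ → ℂ} (hF : Integrable F) {A : ℝ}
    (hA : ∀ s : ℝ, A ≤ |s| → 𝓕 F s = 0) (x : ℝ) {s : ℝ} (hs : A + 1 / 2 ≤ |s|) :
    𝓕 (fun t => F t * (psi (t + x) : ℂ)) s = 0 := by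
  set a : ℝ → ℂ := fun ξ => Complex.exp (↑(-2 * π * ξ * x) * Complex.I) * tri ξ with ha
  set b : ℝ → ℂ := fun t => Complex.exp (↑(-2 * π * t * s) * Complex.I) * F t with hb
  have hai : Integrable a := by
    refine tri_integrable.bdd_mul (c := 1) (by fun_prop) (Filter.Eventually.of_forall fun ξ => ?_)
    rw [Complex.norm_exp_ofReal_mul_I]
  have hbi : Integrable b := by
    refine hF.bdd_mul (c := 1) (by fun_prop) (Filter.Eventually.of_forall fun ξ => ?_)
    rw [Complex.norm_exp_ofReal_mul_I]
  have key : ∫ t, 𝓕 a t • b t = ∫ ξ, a ξ • 𝓕 b ξ := by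
    simpa using! (VectorFourier.integral_fourierIntegral_smul_eq_flip (L := innerₗ ℝ)
      Real.continuous_fourierChar continuous_inner hai hbi)
  have hr : ∀ ξ, a ξ • 𝓕 b ξ = 0 := by
    intro ξ
    rw [hb, fourier_exp_mul]
    by_cases h : 1 / 2 ≤ |ξ|
    · simp [ha, tri_eq_zero h]
    · rw [hA, smul_zero]
      have : |s| ≤ |s + ξ| + |ξ| := by simpa using abs_sub (s + ξ) ξ
      linarith
  simp only [hr, integral_zero] at key
  rw [Real.fourier_real_eq_integral_exp_smul, ← key]
  congr 1
  funext t
  rw [ha, fourier_exp_mul, fourier_tri, add_comm x t, hb]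
  simp only [smul_eq_mul]
  ring

lemma triple_integrable (x y : ℝ) :
    Integrable fun t => psi t * psi (t + x) * psi (t + y) := by
  have hc := psi_continuous
  have hb : ∀ t, ‖psi t‖ ≤ 1 / 4 := fun t => by
    rw [Real.norm_of_nonneg (psi_nonneg t)]; exact psi_le t
  exact (psi_integrable.mul_bdd (c := 1 / 4) (by fun_prop)
    (Filter.Eventually.of_forall fun t => hb (t + x))).mul_bdd (c := 1 / 4) (by fun_prop)
    (Filter.Eventually.of_forall fun t => hb (t + y))

/-- `ψ(t) ψ(t+x) ψ(t+y)` has spectrum in `[-3/2, 3/2]`. -/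
lemma fourier_triple (x y : ℝ) {s : ℝ} (hs : 3 / 2 ≤ |s|) :
    𝓕 (fun t => ((psi t * psi (t + x) * psi (t + y) : ℝ) : ℂ)) s = 0 := by
  have hb : ∀ t, ‖(psi t : ℂ)‖ ≤ 1 / 4 := fun t => by
    rw [Complex.norm_real, Real.norm_of_nonneg (psi_nonneg t)]; exact psi_le t
  have hc := psi_continuous
  have h1 : ∀ s : ℝ, 1 / 2 ≤ |s| → 𝓕 (fun x => (psi x : ℂ)) s = 0 := fun s hs => by
    rw [fourier_psi, tri_eq_zero hs]
  have h2 : ∀ s : ℝ, 1 ≤ |s| → 𝓕 (fun t => (psi t : ℂ) * (psi (t + x) : ℂ)) s = 0 :=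
    fun s hs => fourier_mul_psi psi_integrable.ofReal h1 x (by linarith)
  have hi : Integrable (fun t => (psi t : ℂ) * (psi (t + x) : ℂ)) :=
    psi_integrable.ofReal.mul_bdd (c := 1 / 4) (by fun_prop)
      (Filter.Eventually.of_forall fun t => hb (t + x))
  have h3 := fourier_mul_psi hi h2 y (s := s) (by linarith)
  simpa only [Complex.ofReal_mul] using h3

lemma cos_integrable (x y m θ : ℝ) :
    Integrable fun t => psi t * psi (t + x) * psi (t + y) * cos (m * t + θ) :=
  (triple_integrable x y).mul_bdd (c := 1) (by fun_prop)
    (Filter.Eventually.of_forall fun t => Real.abs_cos_le_one _)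

/-- Real form of `fourier_triple`, with an arbitrary phase `θ`. -/
lemma integral_cos_eq_zero (x y s θ : ℝ) (hs : 3 / 2 ≤ |s|) :
    ∫ t, psi t * psi (t + x) * psi (t + y) * cos (2 * π * s * t + θ) = 0 := by
  have h := fourier_triple x y (s := -s) (by rwa [abs_neg])
  rw [Real.fourier_real_eq_integral_exp_smul] at h
  have h2 : ∫ t : ℝ, Complex.exp (θ * Complex.I) *
      (Complex.exp (↑(-2 * π * t * -s) * Complex.I) •
        ((psi t * psi (t + x) * psi (t + y) : ℝ) : ℂ)) = 0 := by
    rw [integral_const_mul, h, mul_zero]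
  have hc := psi_continuous
  have hi : Integrable fun t : ℝ => Complex.exp (θ * Complex.I) *
      (Complex.exp (↑(-2 * π * t * -s) * Complex.I) •
        ((psi t * psi (t + x) * psi (t + y) : ℝ) : ℂ)) := by
    refine Integrable.const_mul ?_ _
    refine (triple_integrable x y).ofReal.bdd_mul (c := 1) (by fun_prop)
      (Filter.Eventually.of_forall fun ξ => ?_)
    rw [Complex.norm_exp_ofReal_mul_I]
  have h3 := integral_re hi
  simp only [RCLike.re_to_complex] at h3
  rw [h2, Complex.zero_re] at h3
  rw [← h3]
  congr 1
  funext t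
  rw [smul_eq_mul, ← mul_assoc, ← Complex.exp_add, ← add_mul, ← Complex.ofReal_add,
    Complex.re_mul_ofReal, Complex.exp_ofReal_mul_I_re, mul_comm]
  congr 2
  ring

lemma cos_triple (A B C : ℝ) : cos A * cos B * cos C = 1 / 4 * (cos (A + B + C) +
    cos (A + B - C) + cos (A - B + C) + cos (-A + B + C)) := by
  simp only [cos_add, cos_sub, sin_add, sin_sub, cos_neg, sin_neg]
  ring

/-- The cases `ε = 1` and `ε = -1` are the integrands of the 3-decks of `f` and `g`. -/
lemma deck_integrable (ε x y : ℝ) (hε : |ε| ≤ 1) :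
    Integrable fun t => (1 + ε * cos (4 * π * t)) * psi t *
      ((1 + ε * cos (4 * π * (t + x))) * psi (t + x)) *
      ((1 + ε * cos (4 * π * (t + y))) * psi (t + y)) := by
  have hb : ∀ u : ℝ, ‖1 + ε * cos u‖ ≤ 2 := fun u => by
    refine (norm_add_le _ _).trans ?_
    rw [norm_mul, Real.norm_eq_abs, Real.norm_eq_abs, Real.norm_eq_abs, abs_one]
    nlinarith [Real.abs_cos_le_one u, abs_nonneg ε, abs_nonneg (cos u)]
  have h := (((triple_integrable x y).bdd_mul (f := fun t => 1 + ε * cos (4 * π * t)) (c := 2)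
    (by fun_prop) (Filter.Eventually.of_forall fun t => hb _)).bdd_mul
    (f := fun t => 1 + ε * cos (4 * π * (t + x))) (c := 2)
    (by fun_prop) (Filter.Eventually.of_forall fun t => hb _)).bdd_mul
    (f := fun t => 1 + ε * cos (4 * π * (t + y))) (c := 2)
    (by fun_prop) (Filter.Eventually.of_forall fun t => hb _)
  refine h.congr (Filter.Eventually.of_forall fun t => ?_)
  ring

lemma deck_eq (x y : ℝ) :
    ∫ t, (1 + cos (4 * π * t)) * psi t * ((1 + cos (4 * π * (t + x))) * psi (t + x)) *
      ((1 + cos (4 * π * (t + y))) * psi (t + y)) =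
    ∫ t, (1 - cos (4 * π * t)) * psi t * ((1 - cos (4 * π * (t + x))) * psi (t + x)) *
      ((1 - cos (4 * π * (t + y))) * psi (t + y)) := by
  have hf := deck_integrable 1 x y (by simp)
  have hg := deck_integrable (-1) x y (by simp)
  simp only [one_mul, neg_mul, ← sub_eq_add_neg] at hf hg
  rw [← sub_eq_zero, ← integral_sub hf hg]
  set P : ℝ → ℝ → ℝ → ℝ := fun m θ t => psi t * psi (t + x) * psi (t + y) * cos (m * t + θ)
    with hP
  have hi : ∀ m θ, Integrable (P m θ) := fun m θ => cos_integrable x y m θ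
  have h4 : ∀ θ, ∫ t, P (4 * π) θ t = 0 := fun θ => by
    rw [← integral_cos_eq_zero x y 2 θ (by norm_num)]
    simp only [hP]; congr! 5; ring
  have h12 : ∀ θ, ∫ t, P (12 * π) θ t = 0 := fun θ => by
    rw [← integral_cos_eq_zero x y 6 θ (by norm_num)]
    simp only [hP]; congr! 5; ring
  -- The terms of even degree in `∏ (1 + cᵢ) - ∏ (1 - cᵢ)` cancel; those of odd degree only
  -- have the frequencies `±2` and `±6`.
  have hsum : ∀ t, (1 + cos (4 * π * t)) * psi t * ((1 + cos (4 * π * (t + x))) * psi (t + x)) *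
      ((1 + cos (4 * π * (t + y))) * psi (t + y)) -
      (1 - cos (4 * π * t)) * psi t * ((1 - cos (4 * π * (t + x))) * psi (t + x)) *
      ((1 - cos (4 * π * (t + y))) * psi (t + y)) =
      2 * (P (4 * π) 0 t + P (4 * π) (4 * π * x) t + P (4 * π) (4 * π * y) t) +
      1 / 2 * (P (12 * π) (4 * π * (x + y)) t + P (4 * π) (4 * π * (x - y)) t +
        P (4 * π) (4 * π * (y - x)) t + P (4 * π) (4 * π * (x + y)) t) := by
    intro t
    have h := cos_triple (4 * π * t) (4 * π * (t + x)) (4 * π * (t + y))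
    rw [show 4 * π * t + 4 * π * (t + x) + 4 * π * (t + y) = 12 * π * t + 4 * π * (x + y) by ring,
      show 4 * π * t + 4 * π * (t + x) - 4 * π * (t + y) = 4 * π * t + 4 * π * (x - y) by ring,
      show 4 * π * t - 4 * π * (t + x) + 4 * π * (t + y) = 4 * π * t + 4 * π * (y - x) by ring,
      show -(4 * π * t) + 4 * π * (t + x) + 4 * π * (t + y) = 4 * π * t + 4 * π * (x + y) by ring]
      at h
    simp only [hP, add_zero]
    rw [← mul_add (4 * π) t x, ← mul_add (4 * π) t y]
    linear_combination (2 * (psi t * psi (t + x) * psi (t + y))) * h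
  simp only [hsum]
  rw [integral_add (by fun_prop) (by fun_prop), integral_const_mul, integral_const_mul,
    integral_add (by fun_prop) (by fun_prop), integral_add (by fun_prop) (by fun_prop),
    integral_add (by fun_prop) (by fun_prop), integral_add (by fun_prop) (by fun_prop),
    integral_add (by fun_prop) (by fun_prop)]
  simp [h4, h12]

/-- `f(x) = (1 + cos(4πx))ψ(x)` and `g(x) = (1 − cos(4πx))ψ(x)` are
nonnegative smooth integrable functions with the same 3-deck, yet `g` is not a
translate of `f`. -/
theorem counterexample_3deck :
    let f : ℝ → ℝ := fun x => (1 + Real.cos (4 * π * x)) * psi x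
    let g : ℝ → ℝ := fun x => (1 - Real.cos (4 * π * x)) * psi x
    Integrable f ∧ Integrable g ∧
    (∀ x, 0 ≤ f x) ∧ (∀ x, 0 ≤ g x) ∧
    ContDiff ℝ (⊤ : ℕ∞) f ∧ ContDiff ℝ (⊤ : ℕ∞) g ∧
    (∀ x y : ℝ,
      (∫ t : ℝ, f t * f (t + x) * f (t + y)) =
      (∫ t : ℝ, g t * g (t + x) * g (t + y))) ∧
    ¬ ∃ a : ℝ, ∀ᵐ x : ℝ, g x = f (x - a) := by
  intro f g
  have hpsi := psi_contDiff
  have hf : ContDiff ℝ (⊤ : ℕ∞) f := by fun_prop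
  have hg : ContDiff ℝ (⊤ : ℕ∞) g := by fun_prop
  refine ⟨?_, ?_, ?_, ?_, hf, hg, fun x y => deck_eq x y, ?_⟩
  · refine psi_integrable.bdd_mul (c := 2) (by fun_prop) (Filter.Eventually.of_forall fun x => ?_)
    rw [Real.norm_eq_abs, abs_le]
    constructor <;> linarith [neg_one_le_cos (4 * π * x), cos_le_one (4 * π * x)]
  · refine psi_integrable.bdd_mul (c := 2) (by fun_prop) (Filter.Eventually.of_forall fun x => ?_)
    rw [Real.norm_eq_abs, abs_le]
    constructor <;> linarith [neg_one_le_cos (4 * π * x), cos_le_one (4 * π * x)]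
  · exact fun x => mul_nonneg (by linarith [neg_one_le_cos (4 * π * x)]) (psi_nonneg x)
  · exact fun x => mul_nonneg (by linarith [cos_le_one (4 * π * x)]) (psi_nonneg x)
  · rintro ⟨a, ha⟩
    have hfc := hf.continuous
    have heq : g = fun x => f (x - a) :=
      (Continuous.ae_eq_iff_eq volume hg.continuous (by fun_prop)).1 ha
    -- `f` attains the value `1/2` at `0`, whereas `g < 1/2` everywhere.
    have h1 : g a = 1 / 2 := by
      rw [heq]; simp [f, psi]; norm_num
    have h2 : g a < 1 / 2 := by
      by_cases h0 : a = 0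
      · simp [g, h0]
      · have := psi_lt h0
        have := psi_nonneg a
        simp only [g]
        nlinarith [neg_one_le_cos (4 * π * a)]
    linarith
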